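/- There are universal constants c > 0 and c₃ > 0 such that the following holds. Let (X, y) be a λ-anisotropic subgaussian sample of size n in dimension d, and let (x′, y′) be a λ-anisotropic subgaussian sample of size 1 in dimension d, independent of (X, y); set K = X Xᵀ. For any δ ∈ (0, 1/2), if d_∞ ≥ c₃ (n + log(1/δ)), then with probability at least 1 − δ, K is invertible and |yᵀ (K⁻¹ − ‖λ‖₁⁻¹ I_n) X x′| ≤ c √(n log(1/δ) / d_∞) · ( √((n + log(1/δ))/d₂) + (n + log(1/δ))/d_∞ ). -/

import Mathlib

open MeasureTheory ProbabilityTheory Matrix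

noncomputable section

/-- `(X, y)` (with underlying matrix `Z` of independent, mean-zero, unit-variance,
1-subgaussian entries) is a `lam`-anisotropic subgaussian sample: `X = Z diag(lam)^{1/2}`. -/
structure IsAnisoSample {Ω : Type*} [MeasurableSpace Ω] (μ : Measure Ω)
    {n d : ℕ} (lam : Fin d → ℝ)
    (Z X : Ω → Matrix (Fin n) (Fin d) ℝ) (y : Fin n → ℝ) : Prop where
  lam_pos : ∀ j, 0 < lam j
  labels : ∀ i, y i = 1 ∨ y i = -1
  meas : ∀ i j, Measurable fun ω => Z ω i j
  indep : iIndepFun (fun (p : Fin n × Fin d) ω => Z ω p.1 p.2) μ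
  mean_zero : ∀ i j, ∫ ω, Z ω i j ∂μ = 0
  var_one : ∀ i j, ∫ ω, (Z ω i j) ^ 2 ∂μ = 1
  subg_int : ∀ i j (t : ℝ), Integrable (fun ω => Real.exp (t * Z ω i j)) μ
  subg : ∀ i j (t : ℝ), ∫ ω, Real.exp (t * Z ω i j) ∂μ ≤ Real.exp (t ^ 2 / 2)
  X_eq : ∀ ω i j, X ω i j = Real.sqrt (lam j) * Z ω i j

/-- ℓ₂ dimension proxy `d₂ = ‖λ‖₁²/‖λ‖₂²`. -/
def dim2 {d : ℕ} (lam : Fin d → ℝ) : ℝ := (∑ j, lam j) ^ 2 / ∑ j, (lam j) ^ 2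

/-- ℓ∞ dimension proxy `d∞ = ‖λ‖₁/‖λ‖∞`. -/
def dimInf {d : ℕ} (lam : Fin d → ℝ) : ℝ := (∑ j, lam j) / ⨆ j, lam j

/-!
Write `X = Z D` with `D = diag(λ)^{1/2}`, `K = X Xᵀ` and `L = ‖λ‖₁`. For a unit vector `p` the form
`pᵀ (L⁻¹ K - 1) p` is a `λ / L`-weighted sum of the independent centred squares `(Zᵀ p)ⱼ² - 1`,
which are subexponential, so Bernstein's inequality and a union bound over a net of the sphere give
`‖L⁻¹ K - 1‖ ≤ η`, where `η` is a constant multiple of `√(m / d₂) + m / d_∞` and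
`m = n + log (1 / δ)`. On this event `η ≤ 1 / 2`, hence `K` is invertible, and `B = K⁻¹ - L⁻¹`
satisfies `B K = -(L⁻¹ K - 1)`, so that `‖B X‖² = ‖B K B‖ ≤ 2 η² / L`.

With `x' = D z`, the quantity to bound is `wᵀ z` for the vector `w = (B X D)ᵀ y`, which depends on
`Z` only and has `‖w‖² ≤ 2 η² ‖y‖² / d_∞`. As `z` is independent of `Z`, the subgaussian tail of
`wᵀ z`, conditionally on `Z`, gives the result.
-/

section Subexponential

variable {Ω : Type*} [MeasurableSpace Ω] {μ : Measure Ω} {X : Ω → ℝ} {v m t : ℝ}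

/-- `X` is sub-exponential with variance proxy `v` and scale `m`: `𝔼 exp (t X) ≤ exp (v t²)`
whenever `|t| ≤ 1 / m`. The range of `t` is written `|t| * m ≤ 1`, so `m = 0` allows every `t`. -/
structure HasSubexponentialMGF (X : Ω → ℝ) (v m : ℝ) (μ : Measure Ω) : Prop where
  integrable_exp_mul : ∀ t, |t| * m ≤ 1 → Integrable (fun ω => Real.exp (t * X ω)) μ
  mgf_le : ∀ t, |t| * m ≤ 1 → mgf X μ t ≤ Real.exp (v * t ^ 2)

namespace HasSubexponentialMGF

lemma const_mul (hX : HasSubexponentialMGF X v m μ) (a : ℝ) :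
    HasSubexponentialMGF (fun ω => a * X ω) (a ^ 2 * v) (|a| * m) μ where
  integrable_exp_mul t ht := by
    have h := hX.integrable_exp_mul (t * a) (by rwa [abs_mul, mul_assoc])
    simpa only [mul_assoc] using h
  mgf_le t ht := by
    rw [mgf_const_mul]
    convert hX.mgf_le (a * t) (by rwa [abs_mul, mul_comm |a|, mul_assoc]) using 2
    ring

lemma mono_scale {m' : ℝ} (hX : HasSubexponentialMGF X v m μ) (hm : m ≤ m') :
    HasSubexponentialMGF X v m' μ where
  integrable_exp_mul t ht :=
    hX.integrable_exp_mul t ((mul_le_mul_of_nonneg_left hm (abs_nonneg t)).trans ht)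
  mgf_le t ht := hX.mgf_le t ((mul_le_mul_of_nonneg_left hm (abs_nonneg t)).trans ht)

lemma sum_of_iIndepFun [IsFiniteMeasure μ] {ι : Type*} {Y : ι → Ω → ℝ} (hY : iIndepFun Y μ)
    (hmeas : ∀ i, Measurable (Y i)) {w : ι → ℝ} {s : Finset ι}
    (h : ∀ i ∈ s, HasSubexponentialMGF (Y i) (w i) m μ) :
    HasSubexponentialMGF (∑ i ∈ s, Y i) (∑ i ∈ s, w i) m μ where
  integrable_exp_mul t ht :=
    hY.integrable_exp_mul_sum hmeas fun i hi => (h i hi).integrable_exp_mul t ht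
  mgf_le t ht := by
    rw [hY.mgf_sum hmeas, Finset.sum_mul, Real.exp_sum]
    exact Finset.prod_le_prod (fun _ _ => mgf_nonneg) fun i hi => (h i hi).mgf_le t ht

-- The Chernoff exponent `θ = t / (√(v t) + m t)` is admissible, and `v θ² ≤ t` while
-- `θ` times the threshold is `2 t`.
lemma measure_ge_le [IsFiniteMeasure μ] (hX : HasSubexponentialMGF X v m μ) (hm : 0 < m)
    (ht : 0 < t) :
    μ.real {ω | 2 * (√(v * t) + m * t) ≤ X ω} ≤ Real.exp (-t) := by
  set r := √(v * t) + m * t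
  have hr : 0 < r := by positivity
  have hθ : |t / r| * m ≤ 1 := by
    rw [abs_of_pos (by positivity), div_mul_eq_mul_div, div_le_one hr]
    exact mul_comm t m ▸ le_add_of_nonneg_left (Real.sqrt_nonneg _)
  have hvr : v * t ≤ r ^ 2 := by
    rw [← Real.sqrt_le_left hr.le]
    exact le_add_of_nonneg_right (by positivity)
  have hvθ : v * (t / r) ^ 2 ≤ t := by
    rw [div_pow, ← mul_div_assoc, div_le_iff₀ (by positivity)]
    nlinarith
  calc μ.real {ω | 2 * r ≤ X ω}
      ≤ Real.exp (-(t / r) * (2 * r)) * mgf X μ (t / r) :=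
        measure_ge_le_exp_mul_mgf _ (by positivity) (hX.integrable_exp_mul _ hθ)
    _ ≤ Real.exp (-(t / r) * (2 * r)) * Real.exp t := by
        gcongr
        exact (hX.mgf_le _ hθ).trans (Real.exp_le_exp.2 hvθ)
    _ = Real.exp (-t) := by
        rw [← Real.exp_add]
        congr 1
        field_simp
        ring

lemma of_exp_mul_le [IsProbabilityMeasure μ] {g : Ω → ℝ} (hX : Integrable X μ)
    (hX0 : ∫ ω, X ω ∂μ = 0) (hg : Integrable g μ) (hgv : ∫ ω, g ω ∂μ ≤ v)
    (hexp : ∀ t, |t| * m ≤ 1 → ∀ ω, Real.exp (t * X ω) ≤ 1 + t * X ω + t ^ 2 * g ω) :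
    HasSubexponentialMGF X v m μ := by
  have hXm := hX.aemeasurable
  have hlin (t : ℝ) : Integrable (fun ω => 1 + t * X ω) μ :=
    (integrable_const 1).add (hX.const_mul t)
  have hmajorant (t : ℝ) : Integrable (fun ω => 1 + t * X ω + t ^ 2 * g ω) μ :=
    (hlin t).add (hg.const_mul _)
  have hint (t : ℝ) (ht : |t| * m ≤ 1) : Integrable (fun ω => Real.exp (t * X ω)) μ :=
    (hmajorant t).mono' (by fun_prop) <| ae_of_all _ fun ω => by
      rw [Real.norm_of_nonneg (Real.exp_nonneg _)]
      exact hexp t ht ω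
  refine ⟨hint, fun t ht => ?_⟩
  calc mgf X μ t ≤ ∫ ω, (1 + t * X ω + t ^ 2 * g ω) ∂μ :=
        integral_mono (hint t ht) (hmajorant t) (hexp t ht)
    _ = 1 + t ^ 2 * ∫ ω, g ω ∂μ := by
        rw [integral_add (hlin t) (hg.const_mul _),
          integral_add (integrable_const 1) (hX.const_mul t), integral_const_mul,
          integral_const_mul, hX0, integral_const, probReal_univ, one_smul, mul_zero, add_zero]
    _ ≤ 1 + t ^ 2 * v := by gcongr
    _ ≤ Real.exp (v * t ^ 2) := by
        rw [add_comm, mul_comm]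
        exact Real.add_one_le_exp _

end HasSubexponentialMGF

end Subexponential

section SquareOfSubgaussian

lemma lintegral_exp_neg_mul_sq {b : ℝ} (hb : 0 < b) :
    ∫⁻ x : ℝ, ENNReal.ofReal (Real.exp (-b * x ^ 2)) = ENNReal.ofReal √(Real.pi / b) := by
  rw [← integral_gaussian b, ofReal_integral_eq_lintegral_ofReal (integrable_exp_neg_mul_sq hb)]
  exact ae_of_all _ fun x => (Real.exp_pos _).le

lemma lintegral_exp_mul_sub_mul_sq {b : ℝ} (hb : 0 < b) (u : ℝ) :
    ∫⁻ x : ℝ, ENNReal.ofReal (Real.exp (u * x - b * x ^ 2)) =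
      ENNReal.ofReal (Real.exp (u ^ 2 / (4 * b)) * √(Real.pi / b)) := by
  have complete_square (x : ℝ) :
      u * x - b * x ^ 2 = u ^ 2 / (4 * b) + -b * (x - u / (2 * b)) ^ 2 := by
    field_simp
    ring
  simp_rw [complete_square, Real.exp_add, ENNReal.ofReal_mul (Real.exp_nonneg _)]
  rw [lintegral_const_mul _ (by fun_prop),
    lintegral_sub_right_eq_self (fun x => ENNReal.ofReal (Real.exp (-b * x ^ 2))) (u / (2 * b)),
    lintegral_exp_neg_mul_sq hb]

lemma exp_le_one_add_add_sq_mul_exp_abs (x : ℝ) :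
    Real.exp x ≤ 1 + x + x ^ 2 * Real.exp |x| := by
  have h := Complex.norm_exp_sub_sum_le_norm_mul_exp (x : ℂ) 2
  have hcast : Complex.exp x - ∑ k ∈ Finset.range 2, (x : ℂ) ^ k / k.factorial =
      ((Real.exp x - 1 - x : ℝ) : ℂ) := by
    simp [Finset.sum_range_succ, sub_sub]
  rw [hcast, Complex.norm_real, Complex.norm_real, Real.norm_eq_abs, Real.norm_eq_abs,
    sq_abs] at h
  linarith [le_abs_self (Real.exp x - 1 - x)]

variable {Ω : Type*} [MeasurableSpace Ω] {μ : Measure Ω} {X : Ω → ℝ} {c : NNReal}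

lemma lintegral_exp_mul_sub_le (hX : HasSubgaussianMGF X c μ) (x r : ℝ) :
    ∫⁻ ω, ENNReal.ofReal (Real.exp (X ω * x - r)) ∂μ ≤
      ENNReal.ofReal (Real.exp (c * x ^ 2 / 2 - r)) := by
  have hint : Integrable (fun ω => Real.exp (X ω * x - r)) μ := by
    simpa only [sub_eq_add_neg, Real.exp_add, mul_comm x] using
      (hX.integrable_exp_mul x).mul_const (Real.exp (-r))
  rw [← ofReal_integral_eq_lintegral_ofReal hint (ae_of_all _ fun ω => Real.exp_nonneg _)]
  refine ENNReal.ofReal_le_ofReal ?_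
  calc ∫ ω, Real.exp (X ω * x - r) ∂μ = mgf X μ x * Real.exp (-r) := by
        simp only [sub_eq_add_neg, Real.exp_add, integral_mul_const, mgf, mul_comm x]
    _ ≤ Real.exp (c * x ^ 2 / 2) * Real.exp (-r) := by
        gcongr
        exact hX.mgf_le x
    _ = Real.exp (c * x ^ 2 / 2 - r) := by rw [← Real.exp_add, sub_eq_add_neg]

-- Decoupling: `exp (θ X²)` is, up to normalization, the average of `exp (X x)` over a Gaussian
-- variable `x`; swapping the integrals replaces `exp (X x)` by its bound `exp (c x² / 2)`.
lemma lintegral_exp_mul_sq_le [SFinite μ] {θ : ℝ} (hX : HasSubgaussianMGF X c μ) (hθ : 0 < θ)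
    (hc : 2 * c * θ < 1) :
    ∫⁻ ω, ENNReal.ofReal (Real.exp (θ * X ω ^ 2)) ∂μ ≤ ENNReal.ofReal (√(1 - 2 * c * θ))⁻¹ := by
  set b : ℝ := (4 * θ)⁻¹ with hb
  have hb0 : 0 < b := by positivity
  have hbc : 0 < b - c / 2 := by
    rw [hb, sub_pos, div_lt_iff₀ two_pos, inv_mul_eq_div, lt_div_iff₀ (by positivity)]
    linarith
  have hXm := hX.aemeasurable
  have hdecoupled : ENNReal.ofReal √(Real.pi / b) *
      ∫⁻ ω, ENNReal.ofReal (Real.exp (θ * X ω ^ 2)) ∂μ ≤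
        ENNReal.ofReal √(Real.pi / (b - c / 2)) := by
    have hθb (u : ℝ) : θ * u ^ 2 = u ^ 2 / (4 * b) := by
      rw [hb]
      field_simp
    calc ENNReal.ofReal √(Real.pi / b) * ∫⁻ ω, ENNReal.ofReal (Real.exp (θ * X ω ^ 2)) ∂μ
        = ∫⁻ ω, (∫⁻ x : ℝ, ENNReal.ofReal (Real.exp (X ω * x - b * x ^ 2))) ∂μ := by
          rw [← lintegral_const_mul'' _ (by fun_prop)]
          simp_rw [lintegral_exp_mul_sub_mul_sq hb0, hθb,
            ENNReal.ofReal_mul (Real.exp_nonneg _), mul_comm]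
      _ = ∫⁻ x : ℝ, ∫⁻ ω, ENNReal.ofReal (Real.exp (X ω * x - b * x ^ 2)) ∂μ := by
          refine lintegral_lintegral_swap ?_
          have := hXm.comp_fst (ν := (volume : Measure ℝ))
          unfold Function.uncurry
          fun_prop
      _ ≤ ∫⁻ x : ℝ, ENNReal.ofReal (Real.exp (-(b - c / 2) * x ^ 2)) := by
          refine lintegral_mono fun x => (lintegral_exp_mul_sub_le hX x (b * x ^ 2)).trans_eq ?_
          ring_nf
      _ = ENNReal.ofReal √(Real.pi / (b - c / 2)) := lintegral_exp_neg_mul_sq hbc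
  have hnorm : √(Real.pi / (b - c / 2)) = √(Real.pi / b) * (√(1 - 2 * c * θ))⁻¹ := by
    rw [← Real.sqrt_inv, ← Real.sqrt_mul (by positivity)]
    congr 1
    rw [show b - c / 2 = b * (1 - 2 * c * θ) by rw [hb]; field_simp; ring]
    rw [← div_eq_mul_inv, div_div]
  rw [hnorm, ENNReal.ofReal_mul (Real.sqrt_nonneg _)] at hdecoupled
  refine (ENNReal.mul_le_mul_iff_right ?_ ENNReal.ofReal_ne_top).1 hdecoupled
  exact (ENNReal.ofReal_pos.2 (by positivity)).ne'

lemma integrable_exp_mul_sq [SFinite μ] {θ : ℝ} (hX : HasSubgaussianMGF X c μ) (hθ : 0 < θ)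
    (hc : 2 * c * θ < 1) : Integrable (fun ω => Real.exp (θ * X ω ^ 2)) μ := by
  have hXm := hX.aemeasurable
  refine ⟨by fun_prop, ?_⟩
  rw [hasFiniteIntegral_iff_ofReal (ae_of_all _ fun ω => Real.exp_nonneg _)]
  exact (lintegral_exp_mul_sq_le hX hθ hc).trans_lt ENNReal.ofReal_lt_top

lemma integral_exp_mul_sq_le [SFinite μ] {θ : ℝ} (hX : HasSubgaussianMGF X c μ) (hθ : 0 < θ)
    (hc : 2 * c * θ < 1) : ∫ ω, Real.exp (θ * X ω ^ 2) ∂μ ≤ (√(1 - 2 * c * θ))⁻¹ := by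
  rw [← ENNReal.ofReal_le_ofReal_iff (by positivity),
    ofReal_integral_eq_lintegral_ofReal (integrable_exp_mul_sq hX hθ hc)
      (ae_of_all _ fun ω => Real.exp_nonneg _)]
  exact lintegral_exp_mul_sq_le hX hθ hc

lemma integral_exp_inv_four_mul_sq_le [SFinite μ] (hX : HasSubgaussianMGF X c μ) (hc : 0 < c) :
    Integrable (fun ω => Real.exp ((4 * (c : ℝ))⁻¹ * X ω ^ 2)) μ ∧
      ∫ ω, Real.exp ((4 * (c : ℝ))⁻¹ * X ω ^ 2) ∂μ ≤ √2 := by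
  have hθ : 2 * (c : ℝ) * (4 * (c : ℝ))⁻¹ = 1 / 2 := by
    have : (c : ℝ) ≠ 0 := by exact_mod_cast hc.ne'
    field_simp
    norm_num
  have hθ1 : 2 * (c : ℝ) * (4 * (c : ℝ))⁻¹ < 1 := by linarith
  refine ⟨integrable_exp_mul_sq hX (by positivity) hθ1,
    (integral_exp_mul_sq_le hX (by positivity) hθ1).trans_eq ?_⟩
  rw [hθ, ← Real.sqrt_inv]
  norm_num

lemma integral_sq_le [IsProbabilityMeasure μ] (hX : HasSubgaussianMGF X c μ) (hc : 0 < c) :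
    ∫ ω, X ω ^ 2 ∂μ ≤ 2 * c := by
  obtain ⟨hint, hle⟩ := integral_exp_inv_four_mul_sq_le hX hc
  have hsq : Integrable (fun ω => (4 * (c : ℝ))⁻¹ * X ω ^ 2) μ :=
    (hX.memLp 2).integrable_sq.const_mul _
  have hmono : (4 * (c : ℝ))⁻¹ * ∫ ω, X ω ^ 2 ∂μ + 1 ≤ √2 := by
    calc (4 * (c : ℝ))⁻¹ * ∫ ω, X ω ^ 2 ∂μ + 1
        = ∫ ω, ((4 * (c : ℝ))⁻¹ * X ω ^ 2 + 1) ∂μ := by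
          rw [integral_add hsq (integrable_const 1), integral_const_mul, integral_const,
            probReal_univ, one_smul]
      _ ≤ ∫ ω, Real.exp ((4 * (c : ℝ))⁻¹ * X ω ^ 2) ∂μ :=
          integral_mono (hsq.add (integrable_const 1)) hint fun ω => Real.add_one_le_exp _
      _ ≤ √2 := hle
  have hsqrt : √2 ≤ 3 / 2 := Real.sqrt_le_iff.2 ⟨by norm_num, by norm_num⟩
  have := (inv_mul_le_iff₀ (by positivity)).1
    (show (4 * (c : ℝ))⁻¹ * ∫ ω, X ω ^ 2 ∂μ ≤ 1 / 2 by linarith)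
  linarith

lemma exp_mul_sq_sub_le {a θ m u : ℝ} (ha : 0 < a) (hm : 0 ≤ m) (hma : m ≤ 2 * a)
    (hθ : |θ| * (8 * a) ≤ 1) :
    Real.exp (θ * (u ^ 2 - m)) ≤ 1 + θ * (u ^ 2 - m) +
      θ ^ 2 * (128 * a ^ 2 * √(Real.exp 1) * Real.exp ((4 * a)⁻¹ * u ^ 2)) := by
  set w := (u ^ 2 + 2 * a) / (8 * a) with hw
  have hw0 : 0 ≤ w := by positivity
  have hcentered : |u ^ 2 - m| ≤ 8 * a * w := by
    rw [hw, mul_div_cancel₀ _ (by positivity), abs_le]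
    constructor <;> nlinarith [sq_nonneg u]
  have hexponent : |θ * (u ^ 2 - m)| ≤ w := by
    rw [abs_mul]
    calc |θ| * |u ^ 2 - m| ≤ |θ| * (8 * a * w) := by gcongr
      _ = |θ| * (8 * a) * w := by ring
      _ ≤ w := mul_le_of_le_one_left hw0 hθ
  have hsq : (θ * (u ^ 2 - m)) ^ 2 ≤ 128 * (a * θ) ^ 2 * Real.exp w := by
    have hw2 : w ^ 2 ≤ 2 * Real.exp w := by linarith [Real.quadratic_le_exp_of_nonneg hw0]
    calc (θ * (u ^ 2 - m)) ^ 2 = θ ^ 2 * |u ^ 2 - m| ^ 2 := by rw [sq_abs, mul_pow]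
      _ ≤ θ ^ 2 * (8 * a * w) ^ 2 := by gcongr
      _ = 64 * (a * θ) ^ 2 * w ^ 2 := by ring
      _ ≤ 64 * (a * θ) ^ 2 * (2 * Real.exp w) := by gcongr
      _ = 128 * (a * θ) ^ 2 * Real.exp w := by ring
  have hexp_sq : Real.exp w * Real.exp w = √(Real.exp 1) * Real.exp ((4 * a)⁻¹ * u ^ 2) := by
    rw [← Real.exp_half, ← Real.exp_add, ← Real.exp_add, hw]
    congr 1
    field_simp
    ring
  calc Real.exp (θ * (u ^ 2 - m))
      ≤ 1 + θ * (u ^ 2 - m) + (θ * (u ^ 2 - m)) ^ 2 * Real.exp |θ * (u ^ 2 - m)| :=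
        exp_le_one_add_add_sq_mul_exp_abs _
    _ ≤ 1 + θ * (u ^ 2 - m) + 128 * (a * θ) ^ 2 * Real.exp w * Real.exp w := by gcongr
    _ = 1 + θ * (u ^ 2 - m) +
        θ ^ 2 * (128 * a ^ 2 * √(Real.exp 1) * Real.exp ((4 * a)⁻¹ * u ^ 2)) := by
      linear_combination 128 * (a * θ) ^ 2 * hexp_sq

lemma hasSubexponentialMGF_sq_sub_integral [IsProbabilityMeasure μ]
    (hX : HasSubgaussianMGF X c μ) (hc : 0 < c) :
    HasSubexponentialMGF (fun ω => X ω ^ 2 - ∫ ω', X ω' ^ 2 ∂μ) (400 * c ^ 2) (8 * c) μ := by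
  obtain ⟨hexp, hexp_le⟩ := integral_exp_inv_four_mul_sq_le hX hc
  have hsq : Integrable (fun ω => X ω ^ 2) μ := (hX.memLp 2).integrable_sq
  refine .of_exp_mul_le (hsq.sub (integrable_const _)) ?_ (hexp.const_mul _) ?_ fun t ht ω =>
    exp_mul_sq_sub_le hc (integral_nonneg fun ω => sq_nonneg (X ω)) (integral_sq_le hX hc) ht
  · rw [integral_sub hsq (integrable_const _), integral_const, probReal_univ, one_smul, sub_self]
  · have hconst : √(Real.exp 1) * √2 ≤ 3 := by
      rw [← Real.sqrt_mul (Real.exp_nonneg 1), Real.sqrt_le_left (by norm_num)]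
      linarith [Real.exp_one_lt_three]
    rw [integral_const_mul]
    calc 128 * (c : ℝ) ^ 2 * √(Real.exp 1) * ∫ ω, Real.exp ((4 * (c : ℝ))⁻¹ * X ω ^ 2) ∂μ
        ≤ 128 * (c : ℝ) ^ 2 * √(Real.exp 1) * √2 := by gcongr
      _ = 128 * (c : ℝ) ^ 2 * (√(Real.exp 1) * √2) := by ring
      _ ≤ 128 * (c : ℝ) ^ 2 * 3 := by gcongr
      _ ≤ 400 * (c : ℝ) ^ 2 := by linarith [sq_nonneg (c : ℝ)]

end SquareOfSubgaussian

section LinearCombinations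

variable {Ω ι : Type*} [MeasurableSpace Ω] [Fintype ι] {μ : Measure Ω} {c : NNReal}

lemma measureReal_sqrt_lt_abs_le [IsFiniteMeasure μ] {X : Ω → ℝ} (hX : HasSubgaussianMGF X c μ)
    {t : ℝ} (ht : 0 ≤ t) :
    μ.real {ω | √(2 * c * t) < |X ω|} ≤ 2 * Real.exp (-t) := by
  have hexponent : -√(2 * c * t) ^ 2 / (2 * c) = -t ∨ c = 0 := by
    rcases eq_or_ne c 0 with hc | hc
    · exact .inr hc
    · have : (c : ℝ) ≠ 0 := by exact_mod_cast hc
      rw [Real.sq_sqrt (by positivity)]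
      exact .inl (by field_simp)
  rcases hexponent with hexponent | rfl
  · have upper := hX.measure_ge_le (Real.sqrt_nonneg (2 * c * t))
    have lower := hX.neg.measure_ge_le (Real.sqrt_nonneg (2 * c * t))
    rw [hexponent] at upper lower
    refine (measureReal_mono (fun ω hω => ?_)).trans
      ((measureReal_union_le _ _).trans ((add_le_add upper lower).trans_eq (two_mul _).symm))
    exact le_abs.1 (Set.mem_ofPred_eq ▸ hω).le
  · have hX0 := hX.ae_eq_zero_of_hasSubgaussianMGF_zero
    have hnull : μ {ω | √(2 * (0 : NNReal) * t) < |X ω|} = 0 := by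
      rw [measure_eq_zero_iff_ae_notMem]
      filter_upwards [hX0] with ω hω
      simp [hω]
    rw [measureReal_def, hnull, ENNReal.toReal_zero]
    positivity

lemma measureReal_le_weighted_sum_sq_sub_le [IsProbabilityMeasure μ] {G : ι → Ω → ℝ}
    (hG : iIndepFun G μ) (hmeas : ∀ i, Measurable (G i)) (hsub : ∀ i, HasSubgaussianMGF (G i) c μ)
    (hc : 0 < c) (a : ι → ℝ) {M t : ℝ} (hM : 0 < M) (ha : ∀ i, |a i| ≤ M) (ht : 0 < t) :
    μ.real {ω | 40 * c * (√((∑ i, a i ^ 2) * t) + M * t) ≤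
      ∑ i, a i * (G i ω ^ 2 - ∫ ω', G i ω' ^ 2 ∂μ)} ≤ Real.exp (-t) := by
  have hind : iIndepFun (fun i ω => a i * (G i ω ^ 2 - ∫ ω', G i ω' ^ 2 ∂μ)) μ :=
    hG.comp (fun i x => a i * (x ^ 2 - ∫ ω', G i ω' ^ 2 ∂μ)) fun i => by fun_prop
  have hsum := HasSubexponentialMGF.sum_of_iIndepFun (s := Finset.univ) hind
    (fun i => by fun_prop) fun i _ =>
      ((hasSubexponentialMGF_sq_sub_integral (hsub i) hc).const_mul (a i)).mono_scale
        (mul_le_mul_of_nonneg_right (ha i) (by positivity : (0 : ℝ) ≤ 8 * c))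
  refine (measureReal_mono fun ω hω => ?_).trans (hsum.measure_ge_le (by positivity) ht)
  rw [Set.mem_ofPred_eq, Finset.sum_apply]
  refine le_trans ?_ hω
  have hsqrt : √((∑ i, a i ^ 2 * (400 * (c : ℝ) ^ 2)) * t) = 20 * c * √((∑ i, a i ^ 2) * t) := by
    rw [← Finset.sum_mul, show (∑ i, a i ^ 2) * (400 * (c : ℝ) ^ 2) * t =
      (20 * c) ^ 2 * ((∑ i, a i ^ 2) * t) by ring, Real.sqrt_mul (sq_nonneg _),
      Real.sqrt_sq (by positivity)]
  rw [hsqrt]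
  nlinarith [show 0 ≤ c * (M * t) by positivity]

lemma measureReal_le_abs_weighted_sum_sq_sub_le [IsProbabilityMeasure μ] {G : ι → Ω → ℝ}
    (hG : iIndepFun G μ) (hmeas : ∀ i, Measurable (G i)) (hsub : ∀ i, HasSubgaussianMGF (G i) c μ)
    (hc : 0 < c) (a : ι → ℝ) {M t : ℝ} (hM : 0 < M) (ha : ∀ i, |a i| ≤ M) (ht : 0 < t) :
    μ.real {ω | 40 * c * (√((∑ i, a i ^ 2) * t) + M * t) ≤
      |∑ i, a i * (G i ω ^ 2 - ∫ ω', G i ω' ^ 2 ∂μ)|} ≤ 2 * Real.exp (-t) := by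
  have upper := measureReal_le_weighted_sum_sq_sub_le hG hmeas hsub hc a hM ha ht
  have lower := measureReal_le_weighted_sum_sq_sub_le hG hmeas hsub hc (-a) hM
    (fun i => (abs_neg (a i)).trans_le (ha i)) ht
  simp only [Pi.neg_apply, neg_sq, neg_mul, Finset.sum_neg_distrib] at lower
  simp only [le_abs, Set.ofPred_or, two_mul]
  exact (measureReal_union_le _ _).trans (add_le_add upper lower)

variable {z : ι → Ω → ℝ}

lemma dotProduct_self_nonneg (w : ι → ℝ) : 0 ≤ w ⬝ᵥ w := by
  simpa only [star_trivial] using dotProduct_star_self_nonneg w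

lemma hasSubgaussianMGF_dotProduct (hz : iIndepFun z μ) (hsub : ∀ i, HasSubgaussianMGF (z i) c μ)
    (w : ι → ℝ) :
    HasSubgaussianMGF (fun ω => w ⬝ᵥ fun i => z i ω) ((w ⬝ᵥ w).toNNReal * c) μ := by
  have hind : iIndepFun (fun i ω => w i * z i ω) μ :=
    hz.comp (fun i x => w i * x) fun i => by fun_prop
  have hscale : (w ⬝ᵥ w).toNNReal * c = ∑ i, NNReal.mk (w i ^ 2) (sq_nonneg _) * c := by
    rw [← Finset.sum_mul]
    congr 1
    ext
    rw [Real.coe_toNNReal _ (dotProduct_self_nonneg w), NNReal.coe_sum]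
    exact Finset.sum_congr rfl fun i _ => (sq (w i)).symm
  rw [hscale]
  exact HasSubgaussianMGF.sum_of_iIndepFun (s := Finset.univ) hind
    fun i _ => (hsub i).const_mul (w i)

lemma measureReal_sqrt_lt_abs_dotProduct_le [IsFiniteMeasure μ] (hz : iIndepFun z μ)
    (hsub : ∀ i, HasSubgaussianMGF (z i) c μ) (w : ι → ℝ) {t : ℝ} (ht : 0 ≤ t) :
    μ.real {ω | √(2 * (w ⬝ᵥ w * c) * t) < |w ⬝ᵥ fun i => z i ω|} ≤ 2 * Real.exp (-t) := by
  simpa only [NNReal.coe_mul, Real.coe_toNNReal _ (dotProduct_self_nonneg w)] using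
    measureReal_sqrt_lt_abs_le (hasSubgaussianMGF_dotProduct hz hsub w) ht

lemma integral_dotProduct_sq [IsProbabilityMeasure μ] (hz : iIndepFun z μ)
    (hL2 : ∀ i, MemLp (z i) 2 μ)
    (hmean : ∀ i, ∫ ω, z i ω ∂μ = 0) (hvar : ∀ i, ∫ ω, z i ω ^ 2 ∂μ = 1) (w : ι → ℝ) :
    ∫ ω, (w ⬝ᵥ fun i => z i ω) ^ 2 ∂μ = w ⬝ᵥ w := by
  have hterm (i : ι) : MemLp (fun ω => w i * z i ω) 2 μ := (hL2 i).const_mul (w i)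
  have hsum : MemLp (∑ i, fun ω => w i * z i ω) 2 μ := memLp_finsetSum' _ fun i _ => hterm i
  have hterm_mean (i : ι) : ∫ ω, w i * z i ω ∂μ = 0 := by
    rw [integral_const_mul, hmean, mul_zero]
  have hsum_mean : ∫ ω, (∑ i, fun ω => w i * z i ω) ω ∂μ = 0 := by
    simp_rw [Finset.sum_apply]
    rw [integral_finsetSum _ fun i _ => (hterm i).integrable one_le_two]
    exact Finset.sum_eq_zero fun i _ => hterm_mean i
  have hvariance_sum := IndepFun.variance_sum (s := Finset.univ) (fun i _ => hterm i)
    fun i _ j _ hij => (hz.indepFun hij).comp (φ := (w i * ·)) (ψ := (w j * ·))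
      (by fun_prop) (by fun_prop)
  rw [variance_of_integral_eq_zero hsum.aemeasurable hsum_mean] at hvariance_sum
  calc ∫ ω, (w ⬝ᵥ fun i => z i ω) ^ 2 ∂μ = ∑ i, Var[fun ω => w i * z i ω; μ] := by
        simpa only [Finset.sum_apply, dotProduct] using hvariance_sum
    _ = w ⬝ᵥ w := Finset.sum_congr rfl fun i _ => by
        rw [variance_of_integral_eq_zero (hterm i).aemeasurable (hterm_mean i)]
        simp_rw [mul_pow]
        rw [integral_const_mul, hvar, mul_one, sq]

end LinearCombinations

section Independence

variable {Ω α β : Type*} [MeasurableSpace Ω] [MeasurableSpace α] [MeasurableSpace β]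
  {μ : Measure Ω} [IsProbabilityMeasure μ]

lemma measureReal_prodMk_mem_le_of_indepFun {A : Ω → α} {B : Ω → β} (hAB : A ⟂ᵢ[μ] B)
    (hA : Measurable A) (hB : Measurable B) {S : Set (α × β)} (hS : MeasurableSet S) {ε : ℝ}
    (hε : ∀ a, μ.real {ω | (a, B ω) ∈ S} ≤ ε) : μ.real {ω | (A ω, B ω) ∈ S} ≤ ε := by
  have : IsProbabilityMeasure (μ.map A) := Measure.isProbabilityMeasure_map hA.aemeasurable
  have hε0 : 0 ≤ ε := by
    obtain ⟨ω⟩ := μ.nonempty_of_neZero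
    exact measureReal_nonneg.trans (hε (A ω))
  have hslice (a : α) : μ.map B (Prod.mk a ⁻¹' S) ≤ ENNReal.ofReal ε := by
    rw [Measure.map_apply hB (measurable_prodMk_left hS)]
    exact (ENNReal.le_ofReal_iff_toReal_le (measure_ne_top _ _) hε0).2 (hε a)
  refine ENNReal.toReal_le_of_le_ofReal hε0 ?_
  calc μ ((fun ω => (A ω, B ω)) ⁻¹' S)
      = ∫⁻ a, μ.map B (Prod.mk a ⁻¹' S) ∂μ.map A := by
        rw [← Measure.map_apply (hA.prodMk hB) hS, hAB.map_prod_eq_prod_map_map hA.aemeasurable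
          hB.aemeasurable, Measure.prod_apply hS]
    _ ≤ ∫⁻ _, ENNReal.ofReal ε ∂μ.map A := lintegral_mono hslice
    _ = ENNReal.ofReal ε := by rw [lintegral_const, measure_univ, mul_one]

lemma iIndepFun_curry {ι κ : Type*} {X : ι → κ → Ω → β} (hmeas : ∀ i j, Measurable (X i j))
    (hX : iIndepFun (fun (p : ι × κ) ω => X p.1 p.2 ω) μ) :
    iIndepFun (fun i ω j => X i j ω) μ := by
  have hsigma : iIndepFun (fun (p : (_ : ι) × κ) ω => X p.1 p.2 ω) μ :=
    hX.precomp (Equiv.sigmaEquivProd ι κ).injective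
  have hrow (i : ι) : iIndepFun (X i) μ := hX.precomp (g := Prod.mk i) (Prod.mk_right_injective i)
  have (i : ι) (j : κ) : IsProbabilityMeasure (μ.map (X i j)) :=
    Measure.isProbabilityMeasure_map (hmeas i j).aemeasurable
  have hcurry : MeasurableEquiv.piCurry (fun (_ : ι) (_ : κ) => β) ∘ (fun ω p => X p.1 p.2 ω) =
      fun ω i j => X i j ω := rfl
  rw [iIndepFun_iff_map_fun_eq_infinitePi_map (by fun_prop)] at hsigma ⊢
  rw [← hcurry, ← Measure.map_map (by fun_prop) (by fun_prop), hsigma,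
    Measure.infinitePi_map_piCurry fun i j => μ.map (X i j)]
  congr 1 with i : 1
  exact ((hrow i).map_fun_eq_infinitePi_map (hmeas i)).symm

end Independence

section SphereNet

variable {E : Type*}

lemma packingNumber_sphere_le [NormedAddCommGroup E] [NormedSpace ℝ E] [FiniteDimensional ℝ E] :
    Metric.packingNumber 2⁻¹ (Metric.sphere (0 : E) 1) ≤ (5 ^ Module.finrank ℝ E : ℕ) := by
  have hcard (T : Finset E) (hT : (T : Set E) ⊆ Metric.sphere 0 1)
      (hsep : Metric.IsSeparated (2⁻¹ : NNReal) (T : Set E)) :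
      T.card ≤ 5 ^ Module.finrank ℝ E := by
    classical
    rw [← Finset.card_image_of_injective T (smul_right_injective E (two_ne_zero (α := ℝ)))]
    refine Besicovitch.card_le_of_separated _ ?_ ?_
    · simp only [Finset.mem_image, forall_exists_index, and_imp, forall_apply_eq_imp_iff₂]
      intro p hp
      rw [norm_smul, mem_sphere_zero_iff_norm.1 (hT hp), Real.norm_two, mul_one]
    · simp only [Finset.mem_image, forall_exists_index, and_imp, forall_apply_eq_imp_iff₂]
      intro p hp q hq hpq
      have hdist : (2⁻¹ : NNReal) < nndist p q := by
        have hlt : ((2⁻¹ : NNReal) : ENNReal) < edist p q := hsep hp hq fun h => hpq (congrArg _ h)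
        rwa [edist_nndist, ENNReal.coe_lt_coe] at hlt
      have hdist' : (2⁻¹ : ℝ) < ‖p - q‖ := by
        rw [← dist_eq_norm]
        exact_mod_cast hdist
      rw [← smul_sub, norm_smul, Real.norm_two]
      linarith
  refine iSup₂_le fun S hS => iSup_le fun hsep => ?_
  by_contra! hlarge
  obtain ⟨T, hTS, hT⟩ := Set.exists_subset_encard_eq (Order.add_one_le_of_lt hlarge)
  obtain ⟨T, rfl⟩ := (Set.finite_of_encard_eq_coe hT).exists_finset_coe
  have := hcard T (hTS.trans hS) (hsep.subset hTS)
  rw [Set.encard_coe_eq_coe_finsetCard] at hT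
  norm_cast at hT
  lia

lemma exists_finset_isCover_sphere [NormedAddCommGroup E] [NormedSpace ℝ E]
    [FiniteDimensional ℝ E] :
    ∃ N : Finset E, (N : Set E) ⊆ Metric.sphere 0 1 ∧
      Metric.IsCover 2⁻¹ (Metric.sphere (0 : E) 1) N ∧ N.card ≤ 5 ^ Module.finrank ℝ E := by
  have hpacking := packingNumber_sphere_le (E := E)
  have hfinite : Metric.packingNumber 2⁻¹ (Metric.sphere (0 : E) 1) ≠ ⊤ :=
    ne_top_of_le_ne_top (ENat.natCast_ne_top _) hpacking
  have hcard := (Metric.encard_maximalSeparatedSet hfinite).trans_le hpacking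
  obtain ⟨N, hN⟩ := (Set.finite_of_encard_le_coe hcard).exists_finset_coe
  rw [← hN, Set.encard_coe_eq_coe_finsetCard] at hcard
  refine ⟨N, ?_, ?_, by exact_mod_cast hcard⟩
  · exact hN ▸ Metric.maximalSeparatedSet_subset
  · exact hN ▸ Metric.isCover_maximalSeparatedSet hfinite

open RealInnerProductSpace

variable [NormedAddCommGroup E] [InnerProductSpace ℝ E]

lemma norm_sub_mul_norm_add_le {x p : E} (hx : ‖x‖ = 1) (hp : ‖p‖ = 1) (hxp : ‖x - p‖ ≤ 2⁻¹) :
    ‖x - p‖ * ‖x + p‖ ≤ 31 / 32 := by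
  have hparallelogram := parallelogram_law_with_norm ℝ x p
  rw [hx, hp] at hparallelogram
  refine abs_le_of_sq_le_sq' ?_ (by norm_num) |>.2
  nlinarith [norm_nonneg (x - p), mul_self_nonneg (‖x - p‖ ^ 2 - 4⁻¹)]

lemma opNorm_le_of_abs_inner_le_of_isCover {T : E →L[ℝ] E} (hT : T.IsSymmetric) {N : Set E}
    (hN : N ⊆ Metric.sphere 0 1) (hcover : Metric.IsCover 2⁻¹ (Metric.sphere 0 1) N) {ρ : ℝ}
    (hρ0 : 0 ≤ ρ) (hρ : ∀ p ∈ N, |⟪T p, p⟫| ≤ ρ) : ‖T‖ ≤ 32 * ρ := by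
  have hsphere (x : E) (hx : ‖x‖ = 1) : |⟪T x, x⟫| ≤ ρ + 31 / 32 * ‖T‖ := by
    obtain ⟨p, hp, hxp⟩ := hcover (mem_sphere_zero_iff_norm.2 hx)
    have hdist : ‖x - p‖ ≤ 2⁻¹ := by
      have hnndist : nndist x p ≤ 2⁻¹ := edist_le_coe.1 hxp
      rw [← dist_eq_norm]
      exact_mod_cast hnndist
    -- The triangle inequality only gives `|⟪T x, x⟫ - ⟪T p, p⟫| ≤ 2 ‖x - p‖ ‖T‖`, which is vacuous
    -- for a net of mesh `1 / 2`; factoring the difference through `x + p` saves a constant.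
    have hdecomp : ⟪T x, x⟫ = ⟪T p, p⟫ + ⟪T (x - p), x + p⟫ := by
      rw [map_sub, inner_sub_left, inner_add_right, inner_add_right,
        show ⟪T x, p⟫ = ⟪T p, x⟫ from (hT x p).trans (real_inner_comm _ _)]
      ring
    calc |⟪T x, x⟫| ≤ |⟪T p, p⟫| + |⟪T (x - p), x + p⟫| := hdecomp ▸ abs_add_le _ _
      _ ≤ ρ + ‖T (x - p)‖ * ‖x + p‖ := add_le_add (hρ p hp) (abs_real_inner_le_norm _ _)
      _ ≤ ρ + ‖T‖ * ‖x - p‖ * ‖x + p‖ := by gcongr; exact T.le_opNorm _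
      _ ≤ ρ + 31 / 32 * ‖T‖ := by
        have := norm_sub_mul_norm_add_le hx (mem_sphere_zero_iff_norm.1 (hN hp)) hdist
        nlinarith [norm_nonneg T]
  have hnorm : ‖T‖ ≤ ρ + 31 / 32 * ‖T‖ := by
    conv_lhs => rw [T.norm_eq_iSup_rayleighQuotient hT]
    refine ciSup_le fun x => ?_
    rcases eq_or_ne x 0 with rfl | hx
    · rw [T.rayleighQuotient_apply_zero, abs_zero]
      positivity
    · have hunit : ‖‖x‖⁻¹ • x‖ = 1 := norm_smul_inv_norm hx
      rw [← T.rayleigh_smul x (inv_ne_zero (norm_ne_zero_iff.2 hx)),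
        ContinuousLinearMap.rayleighQuotient, hunit, one_pow, div_one]
      exact hsphere _ hunit
  linarith

end SphereNet

lemma dotProduct_self_eq_norm_toLp_sq {ι : Type*} [Fintype ι] (v : ι → ℝ) :
    v ⬝ᵥ v = ‖WithLp.toLp 2 v‖ ^ 2 := by
  rw [EuclideanSpace.real_norm_sq_eq]
  exact Finset.sum_congr rfl fun i _ => (sq (v i)).symm

section OperatorNorm

open scoped Matrix.Norms.L2Operator

variable {ι κ : Type*} [Fintype ι] [Fintype κ] [DecidableEq κ]

lemma dotProduct_self_vecMul_le (y : ι → ℝ) (A : Matrix ι κ ℝ) :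
    (y ᵥ* A) ⬝ᵥ (y ᵥ* A) ≤ ‖A‖ ^ 2 * (y ⬝ᵥ y) := by
  classical
  rw [dotProduct_self_eq_norm_toLp_sq, dotProduct_self_eq_norm_toLp_sq, ← mul_pow,
    ← l2_opNorm_conjTranspose, conjTranspose_eq_transpose_of_trivial, ← mulVec_transpose]
  exact pow_le_pow_left₀ (norm_nonneg _) (l2_opNorm_mulVec Aᵀ (WithLp.toLp 2 y)) 2

lemma norm_diagonal_sqrt_sq_le {lam : κ → ℝ} {M : ℝ} (hM : 0 ≤ M) (hlam : ∀ j, lam j ≤ M) :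
    ‖diagonal fun j => √(lam j)‖ ^ 2 ≤ M := by
  rw [l2_opNorm_diagonal, ← Real.le_sqrt (norm_nonneg _) hM,
    pi_norm_le_iff_of_nonneg (Real.sqrt_nonneg M)]
  intro j
  rw [Real.norm_of_nonneg (Real.sqrt_nonneg _)]
  exact Real.sqrt_le_sqrt (hlam j)

variable [DecidableEq ι]

lemma l2_opNorm_le_of_abs_dotProduct_mulVec_le {A : Matrix ι ι ℝ} (hA : A.IsSymm)
    {N : Set (EuclideanSpace ℝ ι)} (hN : N ⊆ Metric.sphere 0 1)
    (hcover : Metric.IsCover 2⁻¹ (Metric.sphere 0 1) N) {ρ : ℝ} (hρ0 : 0 ≤ ρ)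
    (hρ : ∀ p ∈ N, |p.ofLp ⬝ᵥ (A *ᵥ p.ofLp)| ≤ ρ) : ‖A‖ ≤ 32 * ρ := by
  have hsymm : (toEuclideanCLM (n := ι) (𝕜 := ℝ) A).IsSymmetric := fun x y => by
    change inner ℝ (toEuclideanCLM (n := ι) (𝕜 := ℝ) A x) y =
      inner ℝ x (toEuclideanCLM (n := ι) (𝕜 := ℝ) A y)
    rw [real_inner_comm, inner_toEuclideanCLM, inner_toEuclideanCLM, dotProduct_mulVec,
      ← mulVec_transpose, hA, dotProduct_comm]
  rw [← l2_opNorm_toEuclideanCLM]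
  refine opNorm_le_of_abs_inner_le_of_isCover hsymm hN hcover hρ0 fun p hp => ?_
  rw [real_inner_comm, inner_toEuclideanCLM]
  exact hρ p hp

lemma isUnit_det_of_norm_smul_sub_one_lt_one {K : Matrix ι ι ℝ} {a : ℝ} (hK : ‖a • K - 1‖ < 1) :
    IsUnit K.det := by
  have : CompleteSpace (Matrix ι ι ℝ) := FiniteDimensional.complete ℝ _
  have hunit : IsUnit (1 - (1 - a • K)) := isUnit_one_sub_of_norm_lt_one (by rwa [norm_sub_rev])
  rw [sub_sub_cancel, isUnit_iff_isUnit_det, det_smul] at hunit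
  exact isUnit_of_mul_isUnit_right hunit

lemma inv_sub_smul_one_mul {K : Matrix ι ι ℝ} (hK : IsUnit K.det) (a : ℝ) :
    (K⁻¹ - a • 1) * K = -(a • K - 1) := by
  rw [sub_mul, nonsing_inv_mul _ hK, smul_mul_assoc, one_mul, neg_sub]

lemma norm_inv_sub_smul_one_le {K : Matrix ι ι ℝ} {L η : ℝ} (hL : 0 < L)
    (hK : ‖L⁻¹ • K - 1‖ ≤ η) (hη : η ≤ 1 / 2) : ‖K⁻¹ - L⁻¹ • (1 : Matrix ι ι ℝ)‖ ≤ 2 * η / L := by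
  have hunit := isUnit_det_of_norm_smul_sub_one_lt_one
    (hK.trans_lt (hη.trans_lt one_half_lt_one))
  set E := L⁻¹ • K - 1 with hE
  set B := K⁻¹ - L⁻¹ • (1 : Matrix ι ι ℝ)
  have hfixed : L • B = -E - L • B * E := by
    have hBK : B * K = -E := inv_sub_smul_one_mul hunit L⁻¹
    have hBE : L • B * E = B * K - L • B := by
      rw [hE, mul_sub, mul_one, smul_mul_smul_comm, mul_inv_cancel₀ hL.ne', one_smul]
    rw [hBE, hBK, sub_sub_cancel]
  have hnorm : ‖L • B‖ ≤ η + ‖L • B‖ * η := by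
    calc ‖L • B‖ ≤ ‖E‖ + ‖L • B * E‖ := by
          conv_lhs => rw [hfixed]
          exact (norm_sub_le _ _).trans_eq (by rw [norm_neg])
      _ ≤ η + ‖L • B‖ * η := by grw [norm_mul_le, hK]
  rw [norm_smul, Real.norm_of_nonneg hL.le] at hnorm
  rw [le_div_iff₀ hL]
  nlinarith [mul_nonneg hL.le (norm_nonneg B)]

lemma norm_inv_sub_smul_one_mul_sq_le {X : Matrix ι κ ℝ} {L η : ℝ} (hL : 0 < L)
    (hX : ‖L⁻¹ • (X * Xᵀ) - 1‖ ≤ η) (hη : η ≤ 1 / 2) :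
    ‖((X * Xᵀ)⁻¹ - L⁻¹ • (1 : Matrix ι ι ℝ)) * X‖ ^ 2 ≤ 2 * η ^ 2 / L := by
  have hunit := isUnit_det_of_norm_smul_sub_one_lt_one
    (hX.trans_lt (hη.trans_lt one_half_lt_one))
  have hB := norm_inv_sub_smul_one_le hL hX hη
  have hBK := inv_sub_smul_one_mul hunit L⁻¹
  set E := L⁻¹ • (X * Xᵀ) - 1
  set B := (X * Xᵀ)⁻¹ - L⁻¹ • (1 : Matrix ι ι ℝ) with hBdef
  have hBsymm : Bᵀ = B := by
    rw [hBdef, transpose_sub, transpose_nonsing_inv, transpose_mul, transpose_transpose,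
      transpose_smul, transpose_one]
  have hgram : (B * X) * (B * X)ᵀ = -E * B := by
    rw [transpose_mul, hBsymm, ← hBK]
    simp only [Matrix.mul_assoc]
  calc ‖B * X‖ ^ 2 = ‖(B * X) * (B * X)ᵀ‖ := by
        have hcstar := l2_opNorm_conjTranspose_mul_self (B * X)ᴴ
        rw [conjTranspose_conjTranspose, l2_opNorm_conjTranspose, ← sq] at hcstar
        rw [← hcstar, conjTranspose_eq_transpose_of_trivial]
    _ ≤ ‖E‖ * ‖B‖ := by
        rw [hgram]
        exact (norm_mul_le _ _).trans_eq (by rw [norm_neg])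
    _ ≤ η * (2 * η / L) := by gcongr; exact (norm_nonneg _).trans hX
    _ = 2 * η ^ 2 / L := by ring

end OperatorNorm

section EffectiveDimension

variable {d : ℕ} {lam : Fin d → ℝ} {s : ℝ}

/-- The relative error rate `√(s / d₂) + s / d_∞` of the Gram matrix of a sample with covariance
spectrum `lam`, where `s` measures the sample size plus the logarithmic confidence level. -/
def gramRate {d : ℕ} (lam : Fin d → ℝ) (s : ℝ) : ℝ := √(s / dim2 lam) + s / dimInf lam

lemma gramRate_eq_div (hlam : 0 ≤ ∑ j, lam j) :
    gramRate lam s = (√((∑ j, lam j ^ 2) * s) + (⨆ j, lam j) * s) / ∑ j, lam j := by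
  rw [gramRate, dim2, dimInf, div_div_eq_mul_div, div_div_eq_mul_div,
    Real.sqrt_div' _ (sq_nonneg _), Real.sqrt_sq hlam, add_div, mul_comm s, mul_comm s]

lemma le_iSup_of_fin (j : Fin d) : lam j ≤ ⨆ k, lam k :=
  le_ciSup (Set.finite_range lam).bddAbove j

lemma sum_sq_le_iSup_mul_sum (hlam : ∀ j, 0 ≤ lam j) :
    ∑ j, lam j ^ 2 ≤ (⨆ j, lam j) * ∑ j, lam j := by
  rw [Finset.mul_sum]
  exact Finset.sum_le_sum fun j _ =>
    (sq (lam j)).trans_le (mul_le_mul_of_nonneg_right (le_iSup_of_fin j) (hlam j))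

lemma sum_pos_of_dimInf_pos (hlam : ∀ j, 0 ≤ lam j) (hdim : 0 < dimInf lam) : 0 < ∑ j, lam j :=
  (Finset.sum_nonneg fun j _ => hlam j).lt_of_ne' (div_ne_zero_iff.1 hdim.ne').1

lemma iSup_pos_of_dimInf_pos (hlam : ∀ j, 0 ≤ lam j) (hdim : 0 < dimInf lam) : 0 < ⨆ j, lam j :=
  (Real.iSup_nonneg hlam).lt_of_ne' (div_ne_zero_iff.1 hdim.ne').2

lemma dimInf_le_dim2 (hlam : ∀ j, 0 ≤ lam j) : dimInf lam ≤ dim2 lam := by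
  rcases (Real.iSup_nonneg hlam).eq_or_lt with hsup | hsup
  · rw [dimInf, ← hsup, div_zero]
    exact div_nonneg (sq_nonneg _) (Finset.sum_nonneg fun j _ => sq_nonneg _)
  rcases (Finset.sum_nonneg fun j _ => sq_nonneg (lam j) :
      0 ≤ ∑ j, lam j ^ 2).eq_or_lt with hsq | hsq
  · have hzero (j : Fin d) : lam j = 0 := by
      have := (Finset.sum_eq_zero_iff_of_nonneg fun j _ => sq_nonneg (lam j)).1 hsq.symm
      exact pow_eq_zero_iff two_ne_zero |>.1 (this j (Finset.mem_univ j))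
    simp [dimInf, dim2, hzero]
  · rw [dimInf, dim2, div_le_div_iff₀ hsup hsq, sq, mul_assoc]
    exact mul_le_mul_of_nonneg_left
      ((sum_sq_le_iSup_mul_sum hlam).trans_eq (mul_comm _ _)) (Finset.sum_nonneg fun j _ => hlam j)

lemma gramRate_nonneg (hs : 0 ≤ s) (hdim : 0 ≤ dimInf lam) : 0 ≤ gramRate lam s :=
  add_nonneg (Real.sqrt_nonneg _) (div_nonneg hs hdim)

lemma gramRate_le_mul_gramRate {s' k : ℝ} (hk : 1 ≤ k) (hs : 0 ≤ s) (hs' : s' ≤ k * s)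
    (hlam : ∀ j, 0 ≤ lam j) : gramRate lam s' ≤ k * gramRate lam s := by
  have hdimInf : 0 ≤ dimInf lam :=
    div_nonneg (Finset.sum_nonneg fun j _ => hlam j) (Real.iSup_nonneg hlam)
  have hdim2 : 0 ≤ dim2 lam := hdimInf.trans (dimInf_le_dim2 hlam)
  rw [gramRate, gramRate, mul_add]
  refine add_le_add (Real.sqrt_le_iff.2 ⟨by positivity, ?_⟩) ?_
  · rw [mul_pow, Real.sq_sqrt (by positivity), ← mul_div_assoc]
    gcongr
    nlinarith [mul_nonneg (sub_nonneg.2 hk) hs]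
  · rw [← mul_div_assoc]
    gcongr

lemma gramRate_le_two_mul_sqrt (hlam : ∀ j, 0 ≤ lam j) (hdim : 0 < dimInf lam) (hs : 0 ≤ s)
    (hsdim : s ≤ dimInf lam) : gramRate lam s ≤ 2 * √(s / dimInf lam) := by
  have hratio : s / dimInf lam ≤ √(s / dimInf lam) := by
    refine Real.le_sqrt_of_sq_le (pow_le_of_le_one (by positivity) ?_ two_ne_zero)
    exact (div_le_one hdim).2 hsdim
  rw [two_mul]
  exact add_le_add (Real.sqrt_le_sqrt (by gcongr; exact dimInf_le_dim2 hlam)) hratio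

lemma mul_gramRate_le_half {C : ℝ} (hC : 1 ≤ C) (hlam : ∀ j, 0 ≤ lam j) (hs : 0 < s)
    (hsdim : (4 * C) ^ 2 * s ≤ dimInf lam) : C * gramRate lam s ≤ 1 / 2 := by
  have hdim : 0 < dimInf lam := lt_of_lt_of_le (by positivity) hsdim
  have hratio : √(s / dimInf lam) ≤ (4 * C)⁻¹ := by
    refine Real.sqrt_le_iff.2 ⟨by positivity, ?_⟩
    rw [div_le_iff₀ hdim, inv_pow, ← div_eq_inv_mul, le_div_iff₀' (by positivity)]
    exact hsdim
  calc C * gramRate lam s ≤ C * (2 * √(s / dimInf lam)) := by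
        gcongr
        exact gramRate_le_two_mul_sqrt hlam hdim hs.le <|
          (le_mul_of_one_le_left hs.le (one_le_pow₀ (by linarith))).trans hsdim
    _ ≤ C * (2 * (4 * C)⁻¹) := by gcongr
    _ = 1 / 2 := by field_simp; norm_num

end EffectiveDimension

section SubgaussianMatrix

variable {Ω : Type*} [MeasurableSpace Ω] {μ : Measure Ω} {ι κ : Type*} {c : NNReal}

/-- A random matrix with independent, centred, unit-variance, `c`-subgaussian entries, where
`c` is a variance proxy: the moment generating functions are at most `exp (c * t ^ 2 / 2)`. -/
structure IsSubgaussianMatrix (Z : Ω → Matrix ι κ ℝ) (c : NNReal) (μ : Measure Ω) : Prop where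
  measurable : ∀ i j, Measurable fun ω => Z ω i j
  indep : iIndepFun (fun (p : ι × κ) ω => Z ω p.1 p.2) μ
  mean_zero : ∀ i j, ∫ ω, Z ω i j ∂μ = 0
  second_moment : ∀ i j, ∫ ω, Z ω i j ^ 2 ∂μ = 1
  subgaussian : ∀ i j, HasSubgaussianMGF (fun ω => Z ω i j) c μ

namespace IsSubgaussianMatrix

variable {Z : Ω → Matrix ι κ ℝ}

lemma submatrix_rows (hZ : IsSubgaussianMatrix Z c μ) {ι' : Type*} {f : ι' → ι}
    (hf : f.Injective) : IsSubgaussianMatrix (fun ω => (Z ω).submatrix f id) c μ where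
  measurable i := hZ.measurable (f i)
  indep := hZ.indep.precomp (g := Prod.map f id) (hf.prodMap Function.injective_id)
  mean_zero i := hZ.mean_zero (f i)
  second_moment i := hZ.second_moment (f i)
  subgaussian i := hZ.subgaussian (f i)

lemma iIndepFun_row (hZ : IsSubgaussianMatrix Z c μ) (i : ι) :
    iIndepFun (fun j ω => Z ω i j) μ :=
  hZ.indep.precomp (g := Prod.mk i) (Prod.mk_right_injective i)

lemma iIndepFun_col (hZ : IsSubgaussianMatrix Z c μ) (j : κ) :
    iIndepFun (fun i ω => Z ω i j) μ :=
  hZ.indep.precomp (g := fun i => (i, j)) (Prod.mk_left_injective j)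

lemma indepFun_submatrix_rows [Finite ι] [IsProbabilityMeasure μ]
    (hZ : IsSubgaussianMatrix Z c μ) {α β : Type*} {f : α → ι} {g : β → ι}
    (hfg : ∀ a b, f a ≠ g b) :
    (fun ω a j => Z ω (f a) j) ⟂ᵢ[μ] (fun ω b j => Z ω (g b) j) := by
  classical
  have := Fintype.ofFinite ι
  have hrows : iIndepFun (fun i ω j => Z ω i j) μ := iIndepFun_curry hZ.measurable hZ.indep
  have hdisj : Disjoint (Set.range f).toFinset (Set.range g).toFinset := by
    rw [Set.disjoint_toFinset, Set.disjoint_range_iff]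
    exact hfg
  refine (hrows.indepFun_finset _ _ hdisj fun i =>
    measurable_pi_lambda _ (hZ.measurable i)).comp
    (φ := fun x a => x ⟨f a, by simp⟩) (ψ := fun x b => x ⟨g b, by simp⟩) ?_ ?_
  all_goals exact measurable_pi_lambda _ fun _ => measurable_pi_apply _

variable [Fintype ι]

lemma iIndepFun_vecMul [IsProbabilityMeasure μ] (hZ : IsSubgaussianMatrix Z c μ) (p : ι → ℝ) :
    iIndepFun (fun j ω => (p ᵥ* Z ω) j) μ := by
  have hcols : iIndepFun (fun j ω i => Z ω i j) μ :=
    iIndepFun_curry (fun j i => hZ.measurable i j)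
      (hZ.indep.precomp (g := Prod.swap) Prod.swap_injective)
  exact hcols.comp (fun _ x => p ⬝ᵥ x) fun _ => by unfold dotProduct; fun_prop

lemma measurable_vecMul (hZ : IsSubgaussianMatrix Z c μ) (p : ι → ℝ) (j : κ) :
    Measurable fun ω => (p ᵥ* Z ω) j := by
  have := hZ.measurable
  unfold vecMul dotProduct
  fun_prop

lemma hasSubgaussianMGF_vecMul (hZ : IsSubgaussianMatrix Z c μ) {p : ι → ℝ} (hp : p ⬝ᵥ p = 1)
    (j : κ) : HasSubgaussianMGF (fun ω => (p ᵥ* Z ω) j) c μ := by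
  have h := hasSubgaussianMGF_dotProduct (hZ.iIndepFun_col j) (fun i => hZ.subgaussian i j) p
  rwa [hp, Real.toNNReal_one, one_mul] at h

lemma integral_vecMul_sq [IsProbabilityMeasure μ] (hZ : IsSubgaussianMatrix Z c μ) (p : ι → ℝ)
    (j : κ) : ∫ ω, (p ᵥ* Z ω) j ^ 2 ∂μ = p ⬝ᵥ p :=
  integral_dotProduct_sq (hZ.iIndepFun_col j) (fun i => (hZ.subgaussian i j).memLp 2)
    (fun i => hZ.mean_zero i j) (fun i => hZ.second_moment i j) p

end IsSubgaussianMatrix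

end SubgaussianMatrix

section GramMatrix

variable {ι : Type*} [Fintype ι] {d : ℕ} {lam : Fin d → ℝ}

/-- The sample `X = Z diag(λ)^{1/2}` with covariance spectrum `lam` and isotropic part `Z`. -/
def scaledDesign (lam : Fin d → ℝ) (Z : Matrix ι (Fin d) ℝ) : Matrix ι (Fin d) ℝ :=
  Z * diagonal fun j => √(lam j)

lemma vecMul_scaledDesign_dotProduct_self (hlam : ∀ j, 0 ≤ lam j) (p : ι → ℝ)
    (Z : Matrix ι (Fin d) ℝ) :
    (p ᵥ* scaledDesign lam Z) ⬝ᵥ (p ᵥ* scaledDesign lam Z) = ∑ j, lam j * (p ᵥ* Z) j ^ 2 := by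
  rw [scaledDesign, ← vecMul_vecMul]
  refine Finset.sum_congr rfl fun j _ => ?_
  rw [vecMul_diagonal, ← sq, mul_pow, Real.sq_sqrt (hlam j), mul_comm]

variable [DecidableEq ι]

lemma dotProduct_gram_sub_one_mulVec (hlam : ∀ j, 0 ≤ lam j) (hsum : 0 < ∑ j, lam j)
    (p : ι → ℝ) (Z : Matrix ι (Fin d) ℝ) :
    p ⬝ᵥ (((∑ j, lam j)⁻¹ • (scaledDesign lam Z * (scaledDesign lam Z)ᵀ) - 1) *ᵥ p) =
      (∑ j, lam j * ((p ᵥ* Z) j ^ 2 - p ⬝ᵥ p)) / ∑ j, lam j := by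
  have hquad : p ⬝ᵥ ((scaledDesign lam Z * (scaledDesign lam Z)ᵀ) *ᵥ p) =
      ∑ j, lam j * (p ᵥ* Z) j ^ 2 := by
    rw [← vecMul_scaledDesign_dotProduct_self hlam, ← mulVec_mulVec, dotProduct_mulVec,
      mulVec_transpose]
  rw [sub_mulVec, smul_mulVec, one_mulVec, dotProduct_sub, dotProduct_smul, hquad, smul_eq_mul]
  simp_rw [mul_sub, Finset.sum_sub_distrib]
  rw [← Finset.sum_mul]
  field_simp

variable {Ω : Type*} [MeasurableSpace Ω] {μ : Measure Ω} [IsProbabilityMeasure μ]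
  {Z : Ω → Matrix ι (Fin d) ℝ} {c : NNReal} {t : ℝ}

lemma measureReal_gramRate_le_abs_dotProduct_le (hZ : IsSubgaussianMatrix Z c μ) (hc : 0 < c)
    (hlam : ∀ j, 0 ≤ lam j) (hdim : 0 < dimInf lam) (ht : 0 < t) {p : ι → ℝ}
    (hp : p ⬝ᵥ p = 1) :
    μ.real {ω | 40 * c * gramRate lam t ≤ |p ⬝ᵥ (((∑ j, lam j)⁻¹ •
      (scaledDesign lam (Z ω) * (scaledDesign lam (Z ω))ᵀ) - 1) *ᵥ p)|} ≤ 2 * Real.exp (-t) := by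
  have hsum := sum_pos_of_dimInf_pos hlam hdim
  have htail := measureReal_le_abs_weighted_sum_sq_sub_le (hZ.iIndepFun_vecMul p)
    (hZ.measurable_vecMul p) (hZ.hasSubgaussianMGF_vecMul hp) hc lam
    (iSup_pos_of_dimInf_pos hlam hdim)
    (fun j => (abs_of_nonneg (hlam j)).trans_le (le_iSup_of_fin j)) ht
  simp_rw [hZ.integral_vecMul_sq p] at htail
  simp_rw [dotProduct_gram_sub_one_mulVec hlam hsum, abs_div, abs_of_pos hsum,
    gramRate_eq_div hsum.le, ← mul_div_assoc, div_le_div_iff_of_pos_right hsum]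
  exact htail

open scoped Matrix.Norms.L2Operator

lemma measureReal_gramRate_lt_norm_le (hZ : IsSubgaussianMatrix Z c μ) (hc : 0 < c)
    (hlam : ∀ j, 0 ≤ lam j) (hdim : 0 < dimInf lam) (ht : 0 < t) :
    μ.real {ω | 1280 * c * gramRate lam t < ‖(∑ j, lam j)⁻¹ •
      (scaledDesign lam (Z ω) * (scaledDesign lam (Z ω))ᵀ) - 1‖} ≤
      5 ^ Fintype.card ι * (2 * Real.exp (-t)) := by
  set E : Ω → Matrix ι ι ℝ := fun ω => (∑ j, lam j)⁻¹ •
    (scaledDesign lam (Z ω) * (scaledDesign lam (Z ω))ᵀ) - 1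
  obtain ⟨N, hN, hcover, hcard⟩ := exists_finset_isCover_sphere (E := EuclideanSpace ℝ ι)
  rw [finrank_euclideanSpace] at hcard
  have hunit {p : EuclideanSpace ℝ ι} (hp : p ∈ N) : p.ofLp ⬝ᵥ p.ofLp = 1 := by
    rw [dotProduct_self_eq_norm_toLp_sq, WithLp.toLp_ofLp, mem_sphere_zero_iff_norm.1 (hN hp),
      one_pow]
  have hsubset : {ω | 1280 * c * gramRate lam t < ‖E ω‖} ⊆
      ⋃ p ∈ N, {ω | 40 * c * gramRate lam t ≤ |p.ofLp ⬝ᵥ (E ω *ᵥ p.ofLp)|} := by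
    intro ω hω
    by_contra hnet
    simp only [Set.mem_iUnion, Set.mem_ofPred_eq, not_exists, not_le] at hnet
    have hsymm : (E ω).IsSymm := by
      rw [IsSymm, transpose_sub, transpose_smul, transpose_mul, transpose_transpose, transpose_one]
    have hnorm := l2_opNorm_le_of_abs_dotProduct_mulVec_le hsymm hN hcover
      (mul_nonneg (by positivity) (gramRate_nonneg ht.le hdim.le)) fun p hp => (hnet p hp).le
    exact hω.not_ge (hnorm.trans_eq (by ring))
  calc μ.real {ω | 1280 * c * gramRate lam t < ‖E ω‖}
      ≤ ∑ p ∈ N, μ.real {ω | 40 * c * gramRate lam t ≤ |p.ofLp ⬝ᵥ (E ω *ᵥ p.ofLp)|} :=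
        (measureReal_mono hsubset (measure_ne_top μ _)).trans (measureReal_biUnion_finset_le _ _)
    _ ≤ ∑ _p ∈ N, 2 * Real.exp (-t) := Finset.sum_le_sum fun p hp =>
        measureReal_gramRate_le_abs_dotProduct_le hZ hc hlam hdim ht (hunit hp)
    _ ≤ 5 ^ Fintype.card ι * (2 * Real.exp (-t)) := by
        rw [Finset.sum_const, nsmul_eq_mul]
        gcongr
        exact_mod_cast hcard

end GramMatrix

section Confidence

variable {Ω : Type*} [MeasurableSpace Ω] {μ : Measure Ω} {δ : ℝ}

lemma two_mul_exp_neg_three_mul_log_inv_le (hδ : 0 < δ) (hδ' : δ ≤ 1 / 2) :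
    2 * Real.exp (-(3 * Real.log (1 / δ))) ≤ δ / 2 := by
  have hexp : Real.exp (-(3 * Real.log (1 / δ))) = δ ^ 3 := by
    rw [one_div, Real.log_inv, mul_neg, neg_neg, mul_comm, Real.exp_mul, Real.exp_log hδ]
    exact Real.rpow_ofNat δ 3
  have hcube : δ ^ 3 ≤ (1 / 2) ^ 2 * δ := by
    rw [pow_succ]
    gcongr
  rw [hexp]
  linarith

lemma five_pow_mul_exp_neg_le (n : ℕ) (hδ : 0 < δ) (hδ' : δ ≤ 1 / 2) :
    5 ^ n * (2 * Real.exp (-(2 * n + 3 * Real.log (1 / δ)))) ≤ δ / 2 := by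
  have hfive : (5 : ℝ) ≤ Real.exp 2 := by
    calc (5 : ℝ) ≤ 2.7 ^ 2 := by norm_num
      _ ≤ Real.exp 1 ^ 2 := by
        gcongr
        exact (by norm_num : (2.7 : ℝ) ≤ _).trans Real.exp_one_gt_d9.le
      _ = Real.exp 2 := by rw [← Real.exp_nat_mul]; norm_num
  have hpow : 5 ^ n * Real.exp (-(2 * n)) ≤ 1 := by
    rw [Real.exp_neg, mul_comm (2 : ℝ), Real.exp_nat_mul, ← div_eq_mul_inv]
    exact (div_le_one (by positivity)).2 (by gcongr)
  calc 5 ^ n * (2 * Real.exp (-(2 * n + 3 * Real.log (1 / δ))))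
      = 5 ^ n * Real.exp (-(2 * n)) * (2 * Real.exp (-(3 * Real.log (1 / δ)))) := by
        rw [neg_add, Real.exp_add]
        ring
    _ ≤ 1 * (δ / 2) := by
        gcongr
        exact two_mul_exp_neg_three_mul_log_inv_le hδ hδ'
    _ = δ / 2 := one_mul _

lemma ofReal_one_sub_le_measure [IsProbabilityMeasure μ] {G B₁ B₂ : Set Ω}
    (hG : ∀ ω, ω ∉ B₁ → ω ∉ B₂ → ω ∈ G) (h₁ : μ.real B₁ ≤ δ / 2)
    (h₂ : μ.real B₂ ≤ δ / 2) : ENNReal.ofReal (1 - δ) ≤ μ G := by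
  have hcover : Set.univ ⊆ G ∪ (B₁ ∪ B₂) := fun ω _ => by
    by_cases hω₁ : ω ∈ B₁
    · exact Or.inr (Or.inl hω₁)
    by_cases hω₂ : ω ∈ B₂
    · exact Or.inr (Or.inr hω₂)
    exact Or.inl (hG ω hω₁ hω₂)
  have hmass : (1 : ℝ) ≤ μ.real G + (δ / 2 + δ / 2) := by
    rw [← probReal_univ (μ := μ)]
    refine (measureReal_mono hcover).trans ((measureReal_union_le _ _).trans ?_)
    gcongr
    exact (measureReal_union_le _ _).trans (add_le_add h₁ h₂)
  rw [ENNReal.ofReal_le_iff_le_toReal (measure_ne_top μ G)]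
  linarith [hmass, measureReal_def μ G]

end Confidence

section LeaveOneOut

open scoped Matrix.Norms.L2Operator

variable {ι : Type*} [Fintype ι] [DecidableEq ι] {d : ℕ} {lam : Fin d → ℝ}

/-- The vector `w` for which `yᵀ (K⁻¹ - ‖λ‖₁⁻¹ I) X x' = wᵀ z`, where `X = Z diag(λ)^{1/2}`,
`K = X Xᵀ` and `x' = diag(λ)^{1/2} z`. It depends on the sample only, not on `z`. -/
def leaveOneOutDirection (lam : Fin d → ℝ) (y : ι → ℝ) (Z : Matrix ι (Fin d) ℝ) : Fin d → ℝ :=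
  y ᵥ* (((scaledDesign lam Z * (scaledDesign lam Z)ᵀ)⁻¹ - (∑ j, lam j)⁻¹ • 1) *
    scaledDesign lam Z * diagonal fun j => √(lam j))

lemma dotProduct_mulVec_eq_leaveOneOutDirection_dotProduct (lam : Fin d → ℝ) (y : ι → ℝ)
    (Z : Matrix ι (Fin d) ℝ) (z : Fin d → ℝ) :
    y ⬝ᵥ (((scaledDesign lam Z * (scaledDesign lam Z)ᵀ)⁻¹ - (∑ j, lam j)⁻¹ • 1) *ᵥ
      (scaledDesign lam Z *ᵥ ((diagonal fun j => √(lam j)) *ᵥ z))) =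
      leaveOneOutDirection lam y Z ⬝ᵥ z := by
  rw [leaveOneOutDirection, mulVec_mulVec, mulVec_mulVec, dotProduct_mulVec, Matrix.mul_assoc]

lemma measurable_leaveOneOutDirection (lam : Fin d → ℝ) (y : ι → ℝ) :
    Measurable fun A : ι → Fin d → ℝ => leaveOneOutDirection lam y (of A) := by
  have hX : Continuous fun A : ι → Fin d → ℝ => scaledDesign lam (of A) := by
    unfold scaledDesign
    exact (continuous_matrix fun i j => by fun_prop).matrix_mul continuous_const
  have hK := hX.matrix_mul hX.matrix_transpose
  have hinv (i k : ι) : Measurable fun A : ι → Fin d → ℝ =>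
      (scaledDesign lam (of A) * (scaledDesign lam (of A))ᵀ)⁻¹ i k := by
    simp only [inv_def, Matrix.smul_apply, Ring.inverse_eq_inv', smul_eq_mul]
    exact hK.matrix_det.measurable.inv.mul (hK.matrix_adjugate.matrix_elem i k).measurable
  have hentry (i : ι) (j : Fin d) : Measurable fun A : ι → Fin d → ℝ =>
      scaledDesign lam (of A) i j := (hX.matrix_elem i j).measurable
  refine measurable_pi_lambda _ fun j => ?_
  unfold leaveOneOutDirection
  simp only [vecMul, dotProduct, mul_apply, Matrix.sub_apply]
  exact Finset.measurable_sum _ fun i _ => (Finset.measurable_sum _ fun l _ =>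
    (Finset.measurable_sum _ fun k _ =>
      ((hinv i k).sub_const _).mul (hentry k l)).mul_const _).const_mul (y i)

lemma leaveOneOutDirection_dotProduct_self_le (hlam : ∀ j, 0 ≤ lam j) (hdim : 0 < dimInf lam)
    (y : ι → ℝ) {Z : Matrix ι (Fin d) ℝ} {η : ℝ}
    (hZ : ‖(∑ j, lam j)⁻¹ • (scaledDesign lam Z * (scaledDesign lam Z)ᵀ) - 1‖ ≤ η)
    (hη : η ≤ 1 / 2) :
    leaveOneOutDirection lam y Z ⬝ᵥ leaveOneOutDirection lam y Z ≤
      2 * η ^ 2 * (y ⬝ᵥ y) / dimInf lam := by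
  have hsum := sum_pos_of_dimInf_pos hlam hdim
  have hsup := iSup_pos_of_dimInf_pos hlam hdim
  have hleft := norm_inv_sub_smul_one_mul_sq_le hsum hZ hη
  have hright := norm_diagonal_sqrt_sq_le hsup.le le_iSup_of_fin
  rw [leaveOneOutDirection]
  refine (dotProduct_self_vecMul_le y _).trans ?_
  set B := ((scaledDesign lam Z * (scaledDesign lam Z)ᵀ)⁻¹ - (∑ j, lam j)⁻¹ • 1) *
    scaledDesign lam Z
  set D := diagonal fun j => √(lam j)
  calc ‖B * D‖ ^ 2 * (y ⬝ᵥ y) ≤ (‖B‖ ^ 2 * ‖D‖ ^ 2) * (y ⬝ᵥ y) := by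
        rw [← mul_pow]
        gcongr
        · exact dotProduct_self_nonneg y
        · exact l2_opNorm_mul B D
    _ ≤ (2 * η ^ 2 / ∑ j, lam j) * (⨆ j, lam j) * (y ⬝ᵥ y) := by
        gcongr
        exact dotProduct_self_nonneg y
    _ = 2 * η ^ 2 * (y ⬝ᵥ y) / dimInf lam := by
        rw [dimInf]
        field_simp

variable {Ω : Type*} [MeasurableSpace Ω] {μ : Measure Ω} [IsProbabilityMeasure μ] {c : NNReal}

lemma measureReal_sqrt_lt_abs_dotProduct_le_of_indepFun {α κ : Type*} [MeasurableSpace α]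
    [Fintype κ] {A : Ω → α} {z : Ω → κ → ℝ} {w : α → κ → ℝ} {t : ℝ} (hAz : A ⟂ᵢ[μ] z)
    (hA : Measurable A) (hz : Measurable z) (hw : Measurable w)
    (hind : iIndepFun (fun j ω => z ω j) μ) (hsub : ∀ j, HasSubgaussianMGF (fun ω => z ω j) c μ)
    (ht : 0 ≤ t) :
    μ.real {ω | √(2 * (w (A ω) ⬝ᵥ w (A ω) * c) * t) < |w (A ω) ⬝ᵥ z ω|} ≤
      2 * Real.exp (-t) := by
  refine measureReal_prodMk_mem_le_of_indepFun
    (S := {q | √(2 * (w q.1 ⬝ᵥ w q.1 * c) * t) < |w q.1 ⬝ᵥ q.2|}) hAz hA hz ?_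
    fun a => measureReal_sqrt_lt_abs_dotProduct_le hind hsub (w a) ht
  unfold dotProduct
  exact measurableSet_lt (by fun_prop) (by fun_prop)

end LeaveOneOut

section MainTheorem

open scoped Matrix.Norms.L2Operator

variable {ι : Type*} [Fintype ι] [DecidableEq ι] {d : ℕ} {lam : Fin d → ℝ} {c : NNReal}

lemma measureReal_gramRate_log_lt_norm_le {Ω : Type*} [MeasurableSpace Ω] {μ : Measure Ω}
    [IsProbabilityMeasure μ] {Z : Ω → Matrix ι (Fin d) ℝ} (hZ : IsSubgaussianMatrix Z c μ)
    (hc : 0 < c) (hlam : ∀ j, 0 ≤ lam j) (hdim : 0 < dimInf lam) {δ : ℝ} (hδ : 0 < δ)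
    (hδ' : δ ≤ 1 / 2) :
    μ.real {ω | 3840 * c * gramRate lam (Fintype.card ι + Real.log (1 / δ)) <
      ‖(∑ j, lam j)⁻¹ • (scaledDesign lam (Z ω) * (scaledDesign lam (Z ω))ᵀ) - 1‖} ≤ δ / 2 := by
  have hlog : 0 < Real.log (1 / δ) := Real.log_pos (by rw [lt_div_iff₀ hδ]; linarith)
  have hrate : 1280 * c * gramRate lam (2 * Fintype.card ι + 3 * Real.log (1 / δ)) ≤
      3840 * c * gramRate lam (Fintype.card ι + Real.log (1 / δ)) := by
    calc 1280 * c * gramRate lam (2 * Fintype.card ι + 3 * Real.log (1 / δ))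
        ≤ 1280 * c * (3 * gramRate lam (Fintype.card ι + Real.log (1 / δ))) := by
          gcongr
          exact gramRate_le_mul_gramRate (by norm_num) (by positivity)
            (by linarith [(Fintype.card ι).cast_nonneg (α := ℝ)]) hlam
      _ = 3840 * c * gramRate lam (Fintype.card ι + Real.log (1 / δ)) := by ring
  exact (measureReal_mono fun ω hω => hrate.trans_lt hω).trans <|
    (measureReal_gramRate_lt_norm_le hZ hc hlam hdim (by positivity)).trans
      (five_pow_mul_exp_neg_le (Fintype.card ι) hδ hδ')

lemma abs_dotProduct_inv_sub_mulVec_le {y : ι → ℝ} {Z : Matrix ι (Fin d) ℝ} {z : Fin d → ℝ}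
    {η s : ℝ} (hlam : ∀ j, 0 ≤ lam j) (hdim : 0 < dimInf lam) (hs : 0 ≤ s)
    (hZ : ‖(∑ j, lam j)⁻¹ • (scaledDesign lam Z * (scaledDesign lam Z)ᵀ) - 1‖ ≤ η)
    (hη : η ≤ 1 / 2)
    (hz : |leaveOneOutDirection lam y Z ⬝ᵥ z| ≤
      √(2 * (leaveOneOutDirection lam y Z ⬝ᵥ leaveOneOutDirection lam y Z * c) * (3 * s))) :
    |y ⬝ᵥ (((scaledDesign lam Z * (scaledDesign lam Z)ᵀ)⁻¹ - (∑ j, lam j)⁻¹ • 1) *ᵥ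
      (scaledDesign lam Z *ᵥ ((diagonal fun j => √(lam j)) *ᵥ z)))| ≤
      √(12 * c) * √(y ⬝ᵥ y * s / dimInf lam) * η := by
  have hη0 : 0 ≤ η := (norm_nonneg _).trans hZ
  rw [dotProduct_mulVec_eq_leaveOneOutDirection_dotProduct]
  refine hz.trans (Real.sqrt_le_iff.2 ⟨by positivity, ?_⟩)
  rw [mul_pow, mul_pow, Real.sq_sqrt (by positivity), Real.sq_sqrt
    (div_nonneg (mul_nonneg (dotProduct_self_nonneg y) hs) hdim.le)]
  grw [leaveOneOutDirection_dotProduct_self_le hlam hdim y hZ hη]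
  apply le_of_eq
  ring

theorem stmt6_general (hc : 0 < c) :
    ∃ C > (0 : ℝ), ∃ c₃ > (0 : ℝ),
      ∀ (Ω : Type*) [MeasurableSpace Ω] (μ : Measure Ω) [IsProbabilityMeasure μ]
        (ι : Type*) [Fintype ι] [DecidableEq ι] (d : ℕ) (lam : Fin d → ℝ)
        (Z : Ω → Matrix ι (Fin d) ℝ) (z : Ω → Fin d → ℝ) (y : ι → ℝ) (δ : ℝ),
        (∀ j, 0 ≤ lam j) → IsSubgaussianMatrix Z c μ →
        Measurable z → iIndepFun (fun j ω => z ω j) μ →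
        (∀ j, HasSubgaussianMGF (fun ω => z ω j) c μ) →
        (fun ω i j => Z ω i j) ⟂ᵢ[μ] z →
        0 < δ → δ ≤ 1 / 2 → c₃ * (Fintype.card ι + Real.log (1 / δ)) ≤ dimInf lam →
        ENNReal.ofReal (1 - δ) ≤
          μ {ω |
              let X := scaledDesign lam (Z ω)
              let x' := (diagonal fun j => √(lam j)) *ᵥ z ω
              IsUnit (X * Xᵀ).det ∧
              |y ⬝ᵥ (((X * Xᵀ)⁻¹ - (∑ j, lam j)⁻¹ • 1) *ᵥ (X *ᵥ x'))| ≤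
                C * √(y ⬝ᵥ y * Real.log (1 / δ) / dimInf lam) *
                  gramRate lam (Fintype.card ι + Real.log (1 / δ))} := by
  set C : ℝ := 3840 * c + 1
  have hC : 1 ≤ C := le_add_of_nonneg_left (by positivity)
  refine ⟨√(12 * c) * C, by positivity, (4 * C) ^ 2, by positivity, ?_⟩
  intro Ω _ μ _ ι _ _ d lam Z z y δ hlam hZ hz hind hsub hZz hδ hδ' hsize
  have hlog : 0 < Real.log (1 / δ) := Real.log_pos (by rw [lt_div_iff₀ hδ]; linarith)
  have hdim : 0 < dimInf lam := lt_of_lt_of_le (by positivity) hsize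
  set s : ℝ := Fintype.card ι + Real.log (1 / δ)
  have hs : 0 < s := by positivity
  have hhalf : C * gramRate lam s ≤ 1 / 2 := mul_gramRate_le_half hC hlam hs hsize
  have hdirection := (measureReal_sqrt_lt_abs_dotProduct_le_of_indepFun hZz
    (measurable_pi_lambda _ fun i => measurable_pi_lambda _ (hZ.measurable i)) hz
    (measurable_leaveOneOutDirection lam y) hind hsub (t := 3 * Real.log (1 / δ))
    (by positivity)).trans (two_mul_exp_neg_three_mul_log_inv_le hδ hδ')
  refine ofReal_one_sub_le_measure (fun ω hgram hdir => ?_)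
    (measureReal_gramRate_log_lt_norm_le hZ hc hlam hdim hδ hδ') hdirection
  have hnorm : ‖(∑ j, lam j)⁻¹ • (scaledDesign lam (Z ω) * (scaledDesign lam (Z ω))ᵀ) - 1‖ ≤
      C * gramRate lam s := by
    refine (not_lt.1 hgram).trans ?_
    gcongr
    · exact gramRate_nonneg hs.le hdim.le
    · exact le_add_of_nonneg_right zero_le_one
  refine ⟨isUnit_det_of_norm_smul_sub_one_lt_one
    (hnorm.trans_lt (hhalf.trans_lt one_half_lt_one)), ?_⟩
  refine (abs_dotProduct_inv_sub_mulVec_le hlam hdim hlog.le hnorm hhalf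
    (not_lt.1 hdir)).trans_eq ?_
  ring

end MainTheorem

namespace IsAnisoSample

variable {Ω : Type*} [MeasurableSpace Ω] {μ : Measure Ω} {n d : ℕ} {lam : Fin d → ℝ}
  {Z X : Ω → Matrix (Fin n) (Fin d) ℝ} {y : Fin n → ℝ}

lemma isSubgaussianMatrix (hS : IsAnisoSample μ lam Z X y) : IsSubgaussianMatrix Z 1 μ where
  measurable := hS.meas
  indep := hS.indep
  mean_zero := hS.mean_zero
  second_moment := hS.var_one
  subgaussian i j := ⟨hS.subg_int i j, fun t => by
    simpa only [mgf, NNReal.coe_one, one_mul] using hS.subg i j t⟩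

lemma submatrix_rows_eq_scaledDesign (hS : IsAnisoSample μ lam Z X y) {m : ℕ} (f : Fin m → Fin n)
    (ω : Ω) : (X ω).submatrix f id = scaledDesign lam ((Z ω).submatrix f id) := by
  ext i j
  rw [submatrix_apply, id, hS.X_eq, scaledDesign, mul_diagonal, mul_comm, submatrix_apply, id]

lemma row_eq_diagonal_mulVec (hS : IsAnisoSample μ lam Z X y) (i : Fin n) (ω : Ω) :
    X ω i = (diagonal fun j => √(lam j)) *ᵥ Z ω i := by
  ext j
  rw [hS.X_eq, mulVec_diagonal]

lemma dotProduct_labels_self (hS : IsAnisoSample μ lam Z X y) {m : ℕ} (f : Fin m → Fin n) :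
    (fun i => y (f i)) ⬝ᵥ (fun i => y (f i)) = m := by
  have hlabel (i : Fin n) : y i * y i = 1 := mul_self_eq_one_iff.2 (hS.labels i)
  simp [dotProduct, hlabel]

end IsAnisoSample

/-- Lemma 1 (e1): bounded difference between the leave-one-out term with `K⁻¹` and with the
scaled identity.  The joint sample of size `n+1` consists of an independent pair of a size-`n`
sample `X` (the first `n` rows) and a size-1 sample `x′` (the last row). -/
theorem stmt6 :
    ∃ c > (0 : ℝ), ∃ c₃ > (0 : ℝ),
      ∀ (Ω : Type*) (_ : MeasurableSpace Ω) (μ : Measure Ω), IsProbabilityMeasure μ →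
      ∀ (n d : ℕ), 0 < n → 0 < d →
      ∀ (lam : Fin d → ℝ) (Z W : Ω → Matrix (Fin (n + 1)) (Fin d) ℝ) (y : Fin (n + 1) → ℝ),
        IsAnisoSample μ lam Z W y →
      ∀ δ : ℝ, 0 < δ → δ < 1 / 2 →
        c₃ * (n + Real.log (1 / δ)) ≤ dimInf lam →
        ENNReal.ofReal (1 - δ) ≤
          μ {ω |
              -- `X` = first `n` rows, `x′` = last row, `K = X Xᵀ`
              let X : Matrix (Fin n) (Fin d) ℝ := (W ω).submatrix Fin.castSucc id
              let x' : Fin d → ℝ := W ω (Fin.last n)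
              IsUnit (X * Xᵀ).det ∧
              |(fun i : Fin n => y i.castSucc) ⬝ᵥ
                  (((X * Xᵀ)⁻¹ - (∑ j, lam j)⁻¹ • (1 : Matrix (Fin n) (Fin n) ℝ)) *ᵥ
                    (X *ᵥ x'))| ≤
                c * Real.sqrt (n * Real.log (1 / δ) / dimInf lam) *
                  (Real.sqrt ((n + Real.log (1 / δ)) / dim2 lam) +
                    (n + Real.log (1 / δ)) / dimInf lam)} := by
  obtain ⟨C, hC, c₃, hc₃, hbound⟩ := stmt6_general one_pos
  refine ⟨C, hC, c₃, hc₃, fun Ω _ μ _ n d _ _ lam Z W y hS δ hδ hδ' hsize => ?_⟩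
  have hZ := hS.isSubgaussianMatrix
  have hrows : (fun ω i j => Z ω (Fin.castSucc i) j) ⟂ᵢ[μ] (fun ω => Z ω (Fin.last n)) :=
    (hZ.indepFun_submatrix_rows (f := Fin.castSucc) (g := fun _ : Unit => Fin.last n)
      fun i _ => i.castSucc_ne_last).comp measurable_id (measurable_pi_apply ())
  have h := hbound Ω μ (Fin n) d lam _ _ (fun i => y i.castSucc) δ (fun j => (hS.lam_pos j).le)
    (hZ.submatrix_rows (Fin.castSucc_injective n)) (measurable_pi_lambda _ (hZ.measurable _))
    (hZ.iIndepFun_row _) (hZ.subgaussian _) hrows hδ hδ'.le (by rwa [Fintype.card_fin])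
  simpa only [Fintype.card_fin, hS.dotProduct_labels_self, gramRate,
    hS.submatrix_rows_eq_scaledDesign, hS.row_eq_diagonal_mulVec] using h

end
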